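/- Let (X,π) and (Y,σ) be semidynamical systems on metric spaces, let x ∈ X be an almost periodic point and y ∈ Y. If y is strongly comparable with x, then there exists a continuous map h : cl(π⁺(x)) → cl(σ⁺(y)) such that h(π(q,t)) = σ(h(q),t) for every q ∈ cl(π⁺(x)) and every t ≥ 0, and h(x) = y. -/

import Mathlib

/-!
Sending `q` to the limit of `σ(y, t)` as `t → ∞` with `π(x, t) → q` maps the ω-limit set of `x`
continuously and equivariantly into that of `y`. The limit exists because `σ(y, ·)` converges along
every sequence of such times, and interleaving two sequences shows that their limits agree. An
almost periodic point lies in its own ω-limit set, which is then the whole orbit closure, and `x`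
is sent to `y`.
-/

open Filter Topology
open scoped NNReal

/-- `π` is a semidynamical system on the metric space `Z`. -/
def IsSDS {Z : Type*} [MetricSpace Z] (π : Z → ℝ≥0 → Z) : Prop :=
  Continuous (fun p : Z × ℝ≥0 => π p.1 p.2) ∧ (∀ z, π z 0 = z) ∧
    ∀ z t s, π (π z t) s = π z (t + s)

/-- The positive limit set of a point `x` under `π`. -/
def limitSet {Z : Type*} [MetricSpace Z] (π : Z → ℝ≥0 → Z) (x : Z) : Set Z :=
  {p | ∃ t : ℕ → ℝ≥0, Tendsto t atTop atTop ∧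
    Tendsto (fun n => π x (t n)) atTop (𝓝 p)}

/-- `x` is an almost periodic point of the semidynamical system `π`. -/
def AlmostPer {Z : Type*} [MetricSpace Z] (π : Z → ℝ≥0 → Z) (x : Z) : Prop :=
  ∀ ε : ℝ, 0 < ε → ∃ T : ℝ≥0, 0 < T ∧ ∀ α : ℝ≥0, ∃ τ : ℝ≥0,
    α ≤ τ ∧ τ ≤ α + T ∧ 0 < τ ∧ ∀ t : ℝ≥0, dist (π x (t + τ)) (π x t) < ε

open Set
open scoped omegaLimit

section ApproachFilter

variable {τ X Y : Type*} [TopologicalSpace X] {l : Filter τ} {u : τ → X} {v : τ → Y} {q : X}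

/-- The filter of times `t` going to infinity in the sense of `l` for which `u t` tends to `q`.
For `l = atTop` and `u` the motion of `x`, the sequences tending to it are those of the class
`𝓛_{x,q}^∞`. -/
def approachFilter (l : Filter τ) (u : τ → X) (q : X) : Filter τ :=
  l ⊓ comap u (𝓝 q)

lemma tendsto_approachFilter_iff {ι : Type*} {k : Filter ι} {t : ι → τ} :
    Tendsto t k (approachFilter l u q) ↔ Tendsto t k l ∧ Tendsto (u ∘ t) k (𝓝 q) := by
  rw [approachFilter, tendsto_inf, tendsto_comap_iff]

lemma neBot_approachFilter_iff : (approachFilter l u q).NeBot ↔ MapClusterPt q l u := by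
  rw [approachFilter, neBot_inf_comap_iff_map, inf_comm, mapClusterPt_def, ClusterPt]

instance [FirstCountableTopology X] [l.IsCountablyGenerated] :
    (approachFilter l u q).IsCountablyGenerated :=
  inferInstanceAs (l ⊓ comap u (𝓝 q)).IsCountablyGenerated

lemma eventually_eventually_approachFilter {P : τ → Prop}
    (hP : ∀ᶠ t in approachFilter l u q, P t) :
    ∀ᶠ p in 𝓝 q, ∀ᶠ t in approachFilter l u p, P t := by
  obtain ⟨⟨A, U⟩, ⟨hA, hqU, hU⟩, hAU⟩ :=
    (l.basis_sets.inf ((nhds_basis_opens q).comap u)).eventually_iff.1 hP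
  filter_upwards [hU.mem_nhds hqU] with p hpU
  filter_upwards [inter_mem_inf hA (preimage_mem_comap (hU.mem_nhds hpU))] with t ht using hAU ht

variable [TopologicalSpace Y]

lemma continuousOn_of_tendsto_approachFilter [RegularSpace Y] {h : X → Y} {s : Set X}
    (hs : ∀ q ∈ s, MapClusterPt q l u)
    (hh : ∀ q ∈ s, Tendsto v (approachFilter l u q) (𝓝 (h q))) : ContinuousOn h s := by
  intro q hq
  refine (closed_nhds_basis (h q)).tendsto_right_iff.2 fun V ⟨hV, hVc⟩ => ?_
  have hnear : ∀ᶠ p in 𝓝[s] q, ∀ᶠ t in approachFilter l u p, v t ∈ V :=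
    (eventually_eventually_approachFilter ((hh q hq).eventually hV)).filter_mono nhdsWithin_le_nhds
  filter_upwards [hnear, self_mem_nhdsWithin] with p hpV hp
  have := neBot_approachFilter_iff.2 (hs p hp)
  exact hVc.mem_of_tendsto (hh p hp) hpV

end ApproachFilter

lemma exists_tendsto_of_forall_seq_exists_tendsto {α Y : Type*} [TopologicalSpace Y] [T2Space Y]
    {l : Filter α} [l.NeBot] [l.IsCountablyGenerated] {g : α → Y}
    (hg : ∀ a : ℕ → α, Tendsto a atTop l → ∃ L, Tendsto (fun n => g (a n)) atTop (𝓝 L)) :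
    ∃ L, Tendsto g l (𝓝 L) := by
  obtain ⟨a, ha⟩ := exists_seq_tendsto l
  obtain ⟨L, hL⟩ := hg a ha
  refine ⟨L, tendsto_of_seq_tendsto fun b hb => ?_⟩
  have hhalf : Tendsto (fun n : ℕ => n / 2) atTop atTop := Nat.tendsto_div_const_atTop two_ne_zero
  obtain ⟨M, hM⟩ := hg (fun n => if Even n then a (n / 2) else b (n / 2))
    ((ha.comp hhalf).if' (hb.comp hhalf))
  have heven : Tendsto (fun n : ℕ => 2 * n) atTop atTop := tendsto_id.const_mul_atTop' two_pos
  have hodd : Tendsto (fun n : ℕ => 2 * n + 1) atTop atTop :=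
    tendsto_atTop_mono (fun n => Nat.le_succ _) heven
  have haM : Tendsto (fun n => g (a n)) atTop (𝓝 M) :=
    (hM.comp heven).congr fun n => by simp
  have hbM : Tendsto (fun n => g (b n)) atTop (𝓝 M) :=
    (hM.comp hodd).congr fun n => by simp [Nat.mul_add_div]
  rwa [tendsto_nhds_unique hL haM]

lemma exists_forall_tendsto_approachFilter {τ X Y : Type*} [TopologicalSpace X]
    [FirstCountableTopology X] [TopologicalSpace Y] [T2Space Y] [Nonempty Y]
    {l : Filter τ} [l.IsCountablyGenerated] {u : τ → X} {v : τ → Y}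
    (hconv : ∀ t : ℕ → τ, Tendsto t atTop l →
      (∃ p, Tendsto (fun n => u (t n)) atTop (𝓝 p)) →
      ∃ q, Tendsto (fun n => v (t n)) atTop (𝓝 q)) :
    ∃ h : X → Y, ∀ q, MapClusterPt q l u → Tendsto v (approachFilter l u q) (𝓝 (h q)) := by
  have hlim (q : X) (hq : MapClusterPt q l u) : ∃ L, Tendsto v (approachFilter l u q) (𝓝 L) := by
    have := neBot_approachFilter_iff.2 hq
    refine exists_tendsto_of_forall_seq_exists_tendsto fun t ht => ?_
    obtain ⟨htl, htq⟩ := tendsto_approachFilter_iff.1 ht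
    exact hconv t htl ⟨q, htq⟩
  choose! h hh using hlim
  exact ⟨h, hh⟩

section Flow

variable {τ X Y : Type*} [TopologicalSpace τ] [AddMonoid τ] [TopologicalSpace X]
  [TopologicalSpace Y] {l : Filter τ} (φ : Flow τ X) (ψ : Flow τ Y)

lemma omegaLimit_singleton_subset_closure_orbit (x : X) :
    ω l φ {x} ⊆ closure (φ.orbit x) := by
  simpa only [image2_singleton_right, image_univ, φ.orbit_eq_range] using
    omegaLimit_subset_closure_image2 l φ {x} univ_mem

lemma closure_orbit_eq_omegaLimit (hl : ∀ s, Tendsto (s + ·) l l) {x : X}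
    (hx : x ∈ ω l φ {x}) : closure (φ.orbit x) = ω l φ {x} := by
  refine (closure_minimal ?_ (isClosed_omegaLimit l φ {x})).antisymm
    (omegaLimit_singleton_subset_closure_orbit φ x)
  rintro _ ⟨t, rfl⟩
  exact φ.isInvariant_omegaLimit l {x} hl t hx

lemma tendsto_add_approachFilter {s : τ} (hs : Tendsto (s + ·) l l) (x q : X) :
    Tendsto (s + ·) (approachFilter l (fun t => φ t x) q)
      (approachFilter l (fun t => φ t x) (φ s q)) := by
  obtain ⟨hl, hq⟩ := tendsto_approachFilter_iff.1 (tendsto_id (x := approachFilter l (φ · x) q))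
  refine tendsto_approachFilter_iff.2 ⟨hs.comp hl, ?_⟩
  exact (((φ.continuous_toFun s).tendsto q).comp hq).congr fun t => (φ.map_add s t x).symm

theorem exists_continuousOn_omegaLimit_equivariant [FirstCountableTopology X] [T3Space Y]
    [l.IsCountablyGenerated] (hl : ∀ s, Tendsto (s + ·) l l) (x : X) (y : Y)
    (hconv : ∀ t : ℕ → τ, Tendsto t atTop l →
      (∃ p, Tendsto (fun n => φ (t n) x) atTop (𝓝 p)) →
      ∃ q, Tendsto (fun n => ψ (t n) y) atTop (𝓝 q)) :
    ∃ h : X → Y, ContinuousOn h (ω l φ {x}) ∧ MapsTo h (ω l φ {x}) (ω l ψ {y}) ∧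
      (∀ q ∈ ω l φ {x}, ∀ s, h (φ s q) = ψ s (h q)) ∧
      ∀ q ∈ ω l φ {x},
        Tendsto (fun t => ψ t y) (approachFilter l (fun t => φ t x) q) (𝓝 (h q)) := by
  have hω (q : X) : q ∈ ω l φ {x} ↔ MapClusterPt q l fun t => φ t x :=
    mem_omegaLimit_singleton_iff_mapClusterPt l φ x q
  have : Nonempty Y := ⟨y⟩
  obtain ⟨h, hh⟩ := exists_forall_tendsto_approachFilter
    (u := fun t => φ t x) (v := fun t => ψ t y) hconv
  simp only [← hω] at hh
  refine ⟨h, continuousOn_of_tendsto_approachFilter (fun q => (hω q).1) hh, ?_, ?_, hh⟩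
  · intro q hq
    have := neBot_approachFilter_iff.2 ((hω q).1 hq)
    rw [mem_omegaLimit_singleton_iff_mapClusterPt]
    exact (hh q hq).mapClusterPt.mono inf_le_left
  · intro q hq s
    have := neBot_approachFilter_iff.2 ((hω q).1 hq)
    have hsq : φ s q ∈ ω l φ {x} := φ.isInvariant_omegaLimit l {x} hl s hq
    refine tendsto_nhds_unique ((hh _ hsq).comp (tendsto_add_approachFilter φ (hl s) x q)) ?_
    exact (((ψ.continuous_toFun s).tendsto (h q)).comp (hh q hq)).congr
      fun t => (ψ.map_add s t y).symm

theorem stmt_5_general [FirstCountableTopology X] [T3Space Y] [l.IsCountablyGenerated]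
    (hl : ∀ s, Tendsto (s + ·) l l) {x : X} {y : Y} (hx : x ∈ ω l φ {x})
    (hreturn : ∀ t : ℕ → τ, Tendsto t atTop l →
      Tendsto (fun n => φ (t n) x) atTop (𝓝 x) →
      Tendsto (fun n => ψ (t n) y) atTop (𝓝 y))
    (hconv : ∀ t : ℕ → τ, Tendsto t atTop l →
      (∃ p, Tendsto (fun n => φ (t n) x) atTop (𝓝 p)) →
      ∃ q, Tendsto (fun n => ψ (t n) y) atTop (𝓝 q)) :
    ∃ h : X → Y, ContinuousOn h (closure (φ.orbit x)) ∧
      MapsTo h (closure (φ.orbit x)) (closure (ψ.orbit y)) ∧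
      (∀ q ∈ closure (φ.orbit x), ∀ s, h (φ s q) = ψ s (h q)) ∧ h x = y := by
  obtain ⟨h, hcont, hmaps, hequiv, hlim⟩ :=
    exists_continuousOn_omegaLimit_equivariant φ ψ hl x y hconv
  rw [closure_orbit_eq_omegaLimit φ hl hx]
  refine ⟨h, hcont, hmaps.mono_right (omegaLimit_singleton_subset_closure_orbit ψ y), hequiv, ?_⟩
  obtain ⟨t, htx, htl⟩ :=
    ((mem_omegaLimit_singleton_iff_mapClusterPt l φ x x).1 hx).exists_seq_tendsto
  exact tendsto_nhds_unique ((hlim x hx).comp (tendsto_approachFilter_iff.2 ⟨htl, htx⟩))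
    (hreturn t htl htx)

end Flow

/-- A semidynamical system as a Mathlib flow with time monoid `ℝ≥0`; a flow takes the time as its
first argument. -/
def IsSDS.toFlow {Z : Type*} [MetricSpace Z] {π : Z → ℝ≥0 → Z} (hπ : IsSDS π) : Flow ℝ≥0 Z where
  toFun t z := π z t
  cont' := hπ.1.comp continuous_swap
  map_add' t s z := by rw [hπ.2.2, add_comm]
  map_zero' := hπ.2.1

lemma AlmostPer.mapClusterPt {Z : Type*} [MetricSpace Z] {π : Z → ℝ≥0 → Z} {x : Z}
    (hap : AlmostPer π x) (h₀ : π x 0 = x) : MapClusterPt x atTop (π x) := by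
  refine Metric.nhds_basis_ball.mapClusterPt_iff_frequently.2 fun ε hε => ?_
  refine frequently_atTop.2 fun α => ?_
  obtain ⟨T, -, hT⟩ := hap ε hε
  obtain ⟨τ, hατ, -, -, hτ⟩ := hT α
  exact ⟨τ, hατ, by simpa only [zero_add, h₀, Metric.mem_ball] using hτ 0⟩

theorem stmt_5 {X Y : Type*} [MetricSpace X] [MetricSpace Y]
    (π : X → ℝ≥0 → X) (σ : Y → ℝ≥0 → Y) (hπ : IsSDS π) (hσ : IsSDS σ)
    (x : X) (y : Y) (hap : AlmostPer π x)
    (hsc1 : ∀ t : ℕ → ℝ≥0, Tendsto t atTop atTop →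
      Tendsto (fun n => π x (t n)) atTop (𝓝 x) →
      Tendsto (fun n => σ y (t n)) atTop (𝓝 y))
    (hsc2 : ∀ t : ℕ → ℝ≥0, Tendsto t atTop atTop →
      (∃ p : X, Tendsto (fun n => π x (t n)) atTop (𝓝 p)) →
      ∃ q : Y, Tendsto (fun n => σ y (t n)) atTop (𝓝 q)) :
    ∃ h : X → Y, ContinuousOn h (closure (Set.range (π x))) ∧
      Set.MapsTo h (closure (Set.range (π x))) (closure (Set.range (σ y))) ∧
      (∀ q ∈ closure (Set.range (π x)), ∀ s : ℝ≥0, h (π q s) = σ (h q) s) ∧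
      h x = y := by
  have hx : x ∈ ω⁺ hπ.toFlow {x} :=
    (mem_omegaLimit_singleton_iff_mapClusterPt ..).2 (hap.mapClusterPt (hπ.2.1 x))
  exact stmt_5_general hπ.toFlow hσ.toFlow
    (fun s => tendsto_atTop_mono (fun _ => le_add_self) tendsto_id) hx hsc1 hsc2
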